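/- arXiv:2509.19559 — 2 statements merged into one kernel-verified Lean document; each statement's English description precedes it below -/
import Mathlib

section
/- Submodularity of Gaussian information gain (Proposition, part iii): With the linear–Gaussian sensing model, the set function I is submodular: for all subsets A ⊆ B ⊆ n and every index i ∈ n with i ∉ B, the marginal gains satisfy I(A ∪ {i}) − I(A) ≥ I(B ∪ {i}) − I(B), where I(A) = (1/2)·(log det(K_{AA}+Σ_A) − log det Σ_A). -/
open Matrix

/-- The information gain `I(A) = ½(log det(K_AA + Σ_A) − log det Σ_A)` of
observing the coordinates of a centered Gaussian vector with covariance `K`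
on the index set `A`, under independent per-index Gaussian sensor noise with
standard deviations `σ`. -/
noncomputable def infoGain {ι : Type*} [Fintype ι] [DecidableEq ι]
    (K : Matrix ι ι ℝ) (σ : ι → ℝ) (A : Finset ι) : ℝ :=
  (1 / 2) *
    (Real.log (Matrix.det
        (K.submatrix (fun a : A => (a : ι)) (fun a : A => (a : ι)) +
          Matrix.diagonal fun a : A => (σ (a : ι)) ^ 2)) -
      Real.log (Matrix.det (Matrix.diagonal fun a : A => (σ (a : ι)) ^ 2)))

/-- Quadratic form on `insert i A` with coefficient one at `i`. -/
noncomputable def quadAt {ι : Type*} (M : Matrix ι ι ℝ) (i : ι) (A : Finset ι) (w : ι → ℝ) : ℝ :=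
  M i i + 2 * ∑ a ∈ A, M i a * w a + ∑ a ∈ A, w a * ∑ b ∈ A, M a b * w b

theorem schur_aux {n : Type*} [Fintype n] [DecidableEq n] (N : Matrix n n ℝ) (hN : N.PosDef)
    (b : n → ℝ) (d : ℝ) (v : n → ℝ) :
    d + 2 * (b ⬝ᵥ v) + v ⬝ᵥ (N *ᵥ v) =
      d - b ⬝ᵥ (N⁻¹ *ᵥ b) + (v + N⁻¹ *ᵥ b) ⬝ᵥ (N *ᵥ (v + N⁻¹ *ᵥ b)) := by
  have hu : IsUnit N.det := (Matrix.isUnit_iff_isUnit_det N).1 hN.isUnit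
  have h1 : N *ᵥ (N⁻¹ *ᵥ b) = b := by
    rw [Matrix.mulVec_mulVec, Matrix.mul_nonsing_inv _ hu, Matrix.one_mulVec]
  have hT : Nᵀ = N := by simpa using hN.isHermitian.eq
  have h2 : (N⁻¹ *ᵥ b) ⬝ᵥ (N *ᵥ v) = b ⬝ᵥ v := by
    rw [Matrix.dotProduct_mulVec, ← Matrix.mulVec_transpose, hT, h1]
  rw [Matrix.mulVec_add, h1, add_dotProduct, dotProduct_add, dotProduct_add, h2,
    dotProduct_comm v b, dotProduct_comm (N⁻¹ *ᵥ b) b]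
  ring

theorem det_insert_aux {ι : Type*} [Fintype ι] [DecidableEq ι] (M : Matrix ι ι ℝ)
    (hM : M.PosDef) (i : ι) (A : Finset ι) (hi : i ∉ A) :
    ∃ s : ℝ, (M.submatrix (fun a : (insert i A : Finset ι) => (a : ι)) (fun a : (insert i A : Finset ι) => (a : ι))).det
        = (M.submatrix (fun a : A => (a : ι)) (fun a : A => (a : ι))).det * s ∧
      (∀ w, s ≤ quadAt M i A w) ∧ ∃ w, (∀ x, x ∉ A → w x = 0) ∧ quadAt M i A w = s := by
  set N := M.submatrix (fun a : A => (a : ι)) (fun a : A => (a : ι)) with hNdef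
  have hN : N.PosDef := hM.submatrix Subtype.val_injective
  have hu : IsUnit N.det := (Matrix.isUnit_iff_isUnit_det N).1 hN.isUnit
  have hT : ∀ x y, M x y = M y x := fun x y => by
    simpa using (hM.isHermitian.apply x y).symm
  let b : A → ℝ := fun a => M i a
  have hq : ∀ w : ι → ℝ, quadAt M i A w = M i i - b ⬝ᵥ (N⁻¹ *ᵥ b) +
      ((fun a : A => w a) + N⁻¹ *ᵥ b) ⬝ᵥ (N *ᵥ ((fun a : A => w a) + N⁻¹ *ᵥ b)) := by
    intro w
    rw [← schur_aux N hN]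
    unfold quadAt
    simp only [dotProduct, Matrix.mulVec, hNdef, Matrix.submatrix_apply, b]
    rw [← Finset.sum_coe_sort A, ← Finset.sum_coe_sort A]
    congr 1
    refine Finset.sum_congr rfl fun a _ => ?_
    rw [← Finset.sum_coe_sort A]
  refine ⟨M i i - b ⬝ᵥ (N⁻¹ *ᵥ b), ?_, ?_, ?_⟩
  · let e : A ⊕ Unit ≃ (insert i A : Finset ι) :=
      ((Finset.subtypeInsertEquivOption hi).trans (Equiv.optionEquivSumPUnit A)).symm
    have e1 : ∀ a : A, ((e (Sum.inl a) : (insert i A : Finset ι)) : ι) = a := fun a => by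
      simp [e, Finset.subtypeInsertEquivOption]
    have e2 : ∀ u : Unit, ((e (Sum.inr u) : (insert i A : Finset ι)) : ι) = i := fun a => by
      simp [e, Finset.subtypeInsertEquivOption]
    rw [← Matrix.det_submatrix_equiv_self e]
    have hblk : (M.submatrix (fun a : (insert i A : Finset ι) => (a : ι))
        (fun a : (insert i A : Finset ι) => (a : ι))).submatrix e e =
        Matrix.fromBlocks N (Matrix.of fun a (_ : Unit) => b a) (Matrix.of fun (_ : Unit) a => b a)
          (Matrix.of fun _ _ => M i i) := by
      ext x y
      rcases x with x | x <;> rcases y with y | y <;> simp [e1, e2, hNdef, b]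
      exact hT _ _
    let _ := N.invertibleOfIsUnitDet hu
    rw [hblk, Matrix.det_fromBlocks₁₁, Matrix.invOf_eq_nonsing_inv, Matrix.mul_assoc]
    simp [Matrix.mul_apply, dotProduct, Matrix.mulVec]
  · intro w
    rw [hq]
    have := hN.posSemidef.dotProduct_mulVec_nonneg ((fun a : A => w a) + N⁻¹ *ᵥ b)
    simp only [star_trivial] at this
    linarith
  · refine ⟨fun x => if h : x ∈ A then -(N⁻¹ *ᵥ b) ⟨x, h⟩ else 0, fun x hx => by simp [hx], ?_⟩
    rw [hq]
    have : ((fun a : A => if h : (a : ι) ∈ A then -(N⁻¹ *ᵥ b) ⟨a, h⟩ else 0) + N⁻¹ *ᵥ b) = 0 := by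
      ext a
      simp
    rw [this]
    simp

theorem infoGain_eq_aux {ι : Type*} [Fintype ι] [DecidableEq ι]
    (K : Matrix ι ι ℝ) (σ : ι → ℝ) (hσ : ∀ x : ι, 0 < σ x) (A : Finset ι) :
    infoGain K σ A = (1 / 2) * (Real.log ((K + Matrix.diagonal fun x => σ x ^ 2).submatrix
      (fun a : A => (a : ι)) (fun a : A => (a : ι))).det - ∑ a ∈ A, Real.log (σ a ^ 2)) := by
  unfold infoGain
  rw [Matrix.det_diagonal, Real.log_prod (fun (x : A) _ => (pow_pos (hσ (x : ι)) 2).ne'),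
    Finset.sum_coe_sort A (fun a => Real.log (σ a ^ 2))]
  congr 4
  ext x y
  simp only [Matrix.add_apply, Matrix.submatrix_apply, Matrix.diagonal_apply, Subtype.coe_inj]

theorem infoGain_submodular {ι : Type*} [Fintype ι] [DecidableEq ι]
    (K : Matrix ι ι ℝ) (σ : ι → ℝ)
    (hK : K.PosSemidef) (hσ : ∀ x : ι, 0 < σ x)
    (A B : Finset ι) (hAB : A ⊆ B) (i : ι) (hi : i ∉ B) :
    infoGain K σ (insert i A) - infoGain K σ A ≥
      infoGain K σ (insert i B) - infoGain K σ B := by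
  have hiA : i ∉ A := fun h => hi (hAB h)
  simp only [infoGain_eq_aux K σ hσ]
  have hM : (K + Matrix.diagonal fun x => σ x ^ 2).PosDef :=
    Matrix.PosDef.posSemidef_add hK (Matrix.PosDef.diagonal fun x => pow_pos (hσ x) 2)
  generalize (K + Matrix.diagonal fun x => σ x ^ 2) = M at hM
  have hpos : ∀ C : Finset ι, 0 < (M.submatrix (fun a : C => (a : ι)) (fun a : C => (a : ι))).det :=
    fun C => (hM.submatrix Subtype.val_injective).det_pos
  obtain ⟨s, hs, -, w, hw, hws⟩ := det_insert_aux M hM i A hiA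
  obtain ⟨t, ht, htle, -⟩ := det_insert_aux M hM i B hi
  have hspos : 0 < s := by
    have := hpos (insert i A)
    rw [hs] at this
    exact (mul_pos_iff_of_pos_left (hpos A)).1 this
  have htpos : 0 < t := by
    have := hpos (insert i B)
    rw [ht] at this
    exact (mul_pos_iff_of_pos_left (hpos B)).1 this
  have hAeq : quadAt M i B w = quadAt M i A w := by
    unfold quadAt
    have h0 : ∀ f : ι → ℝ, ∑ a ∈ B, f a * w a = ∑ a ∈ A, f a * w a := fun f =>
      (Finset.sum_subset hAB fun x _ hx => by simp [hw x hx]).symm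
    simp only [h0, mul_comm (w _)]
  have hts : t ≤ s := by
    rw [← hws, ← hAeq]
    exact htle w
  have hlog := Real.log_le_log htpos hts
  rw [hs, ht, Real.log_mul (hpos A).ne' hspos.ne', Real.log_mul (hpos B).ne' htpos.ne',
    Finset.sum_insert hi, Finset.sum_insert hiA]
  linarith
end

section
/- Monotone decrease of Gaussian posterior variance under added observations: With the linear–Gaussian sensing model, for all subsets A ⊆ B ⊆ n and every index i ∈ n with i ∉ B, the posterior variances satisfy s_{i|B} ≤ s_{i|A}, where s_{i|A} := K_{ii} − K_{i,A}(K_{AA}+Σ_A)^{-1}K_{A,i}. -/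
open Matrix

/-- The posterior variance `s_{i|A} = K_ii − K_{i,A}(K_AA + Σ_A)⁻¹ K_{A,i}` of
the Gaussian coordinate `Y_i` given the noisy observations of the coordinates
in `A`, under independent per-index Gaussian sensor noise with standard
deviations `σ`. -/
noncomputable def postVar {ι : Type*} [Fintype ι] [DecidableEq ι]
    (K : Matrix ι ι ℝ) (σ : ι → ℝ) (A : Finset ι) (i : ι) : ℝ :=
  K i i -
    (fun a : A => K i (a : ι)) ⬝ᵥ
      ((K.submatrix (fun a : A => (a : ι)) (fun a : A => (a : ι)) +
          Matrix.diagonal fun a : A => (σ (a : ι)) ^ 2)⁻¹ *ᵥ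
        fun a : A => K (a : ι) i)

lemma quad_lower {m : Type*} [Fintype m] [DecidableEq m] (N : Matrix m m ℝ) (hN : N.PosDef)
    (b x : m → ℝ) : 2 * (x ⬝ᵥ b) - x ⬝ᵥ (N *ᵥ x) ≤ b ⬝ᵥ (N⁻¹ *ᵥ b) := by
  have hu : IsUnit N.det := (Matrix.isUnit_iff_isUnit_det N).1 hN.isUnit
  have hT : Nᵀ = N := by simpa using hN.isHermitian.eq
  have h1 : N *ᵥ (N⁻¹ *ᵥ b) = b := by
    rw [mulVec_mulVec, Matrix.mul_nonsing_inv N hu, one_mulVec]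
  have h := hN.posSemidef.dotProduct_mulVec_nonneg (x - N⁻¹ *ᵥ b)
  rw [star_trivial, mulVec_sub, h1, sub_dotProduct, dotProduct_sub, dotProduct_sub] at h
  have h2 : (N⁻¹ *ᵥ b) ⬝ᵥ (N *ᵥ x) = x ⬝ᵥ b := by
    rw [dotProduct_mulVec, ← mulVec_transpose, hT, h1, dotProduct_comm]
  rw [h2, dotProduct_comm (N⁻¹ *ᵥ b) b] at h
  linarith

lemma quad_mono {m k : Type*} [Fintype m] [DecidableEq m] [Fintype k] [DecidableEq k]
    (N : Matrix m m ℝ) (hN : N.PosDef) (e : k → m) (he : Function.Injective e) (b : m → ℝ) :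
    (b ∘ e) ⬝ᵥ ((N.submatrix e e)⁻¹ *ᵥ (b ∘ e)) ≤ b ⬝ᵥ (N⁻¹ *ᵥ b) := by
  have hA : (N.submatrix e e).PosDef := hN.submatrix he
  have hu : IsUnit (N.submatrix e e).det := (Matrix.isUnit_iff_isUnit_det _).1 hA.isUnit
  set u := (N.submatrix e e)⁻¹ *ᵥ (b ∘ e) with hudef
  have h1 : (N.submatrix e e) *ᵥ u = b ∘ e := by
    rw [hudef, mulVec_mulVec, Matrix.mul_nonsing_inv _ hu, one_mulVec]
  let P : Matrix k m ℝ := (1 : Matrix m m ℝ).submatrix e id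
  have hP : ∀ v : m → ℝ, P *ᵥ v = v ∘ e := by
    intro v
    ext a
    simp [P, mulVec, dotProduct, Matrix.one_apply]
  have hPN : P * N * Pᵀ = N.submatrix e e := by
    ext a c
    simp [P, Matrix.mul_apply, Matrix.one_apply]
  have h := quad_lower N hN b (u ᵥ* P)
  have h2 : (u ᵥ* P) ⬝ᵥ (N *ᵥ (u ᵥ* P)) = u ⬝ᵥ (b ∘ e) := by
    rw [← dotProduct_mulVec, ← mulVec_transpose, mulVec_mulVec, mulVec_mulVec,
      hPN, h1]
  rw [h2, ← dotProduct_mulVec, hP] at h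
  rw [dotProduct_comm]
  linarith

/-- **Monotone decrease of Gaussian posterior variance under added
observations.** If `K` is positive semidefinite and all noise standard
deviations are positive, then for all index subsets `A ⊆ B` and every index
`i ∉ B`, the posterior variances satisfy `s_{i|B} ≤ s_{i|A}`. -/
theorem postVar_antitone {ι : Type*} [Fintype ι] [DecidableEq ι]
    (K : Matrix ι ι ℝ) (σ : ι → ℝ)
    (hK : K.PosSemidef) (hσ : ∀ x : ι, 0 < σ x)
    (A B : Finset ι) (hAB : A ⊆ B) (i : ι) (hi : i ∉ B) :
    postVar K σ B i ≤ postVar K σ A i := by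
  have hM : (K + Matrix.diagonal fun a => σ a ^ 2).PosDef :=
    PosDef.posSemidef_add hK (PosDef.diagonal fun a => pow_pos (hσ a) 2)
  have key : ∀ C : Finset ι,
      K.submatrix (fun a : C => (a : ι)) (fun a : C => (a : ι)) +
        Matrix.diagonal (fun a : C => (σ (a : ι)) ^ 2) =
      (K + Matrix.diagonal fun a => σ a ^ 2).submatrix
        (fun a : C => (a : ι)) (fun a : C => (a : ι)) := by
    intro C
    ext a c
    by_cases hac : a = c
    · subst hac
      simp
    · have hac2 : (a : ι) ≠ c := fun h => hac (Subtype.ext h)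
      simp [hac, hac2]
  have hsymm : ∀ a, K i a = K a i := fun a => by simpa using hK.isHermitian.apply a i
  have h := quad_mono
    ((K + Matrix.diagonal fun a => σ a ^ 2).submatrix
        (fun a : B => (a : ι)) (fun a : B => (a : ι)))
    (hM.submatrix Subtype.val_injective)
    (fun a : A => (⟨a, hAB a.2⟩ : B))
    (fun a c hac => Subtype.ext (by simpa using hac))
    (fun a : B => K (a : ι) i)
  unfold postVar
  rw [key, key]
  simp only [hsymm]
  exact sub_le_sub_left h _
end
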